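/- Let M ≥ 3 be an integer divisible by 3, set c = 2/3 and k = M/3, let δ ∈ [0, 1/6], and for each m ∈ {0,…,M} define u_F(m) = (1/2+δ)·[(1−c)m + max(0, M−k−m)] + (1/2−δ)·(1−c)m and u_G(m) = (1/2−δ)·[(1−c)m + max(0, M−k−m)] + (1/2+δ)·(1−c)m. Then: (i) max_{0 ≤ m' ≤ M} u_F(m') = u_F(0) = (1/2+δ)·(2M/3); (ii) max_{0 ≤ m' ≤ M} u_G(m') = u_G(M) = M/3; and (iii) for every m ∈ {0,…,M}: ( u_F(0) − u_F(m) ) + ( u_G(M) − u_G(m) ) ≥ (2/3)·M·δ. -/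

import Mathlib

/-- **Core per-round regret computation in the Ω(M√T) lower bound**
(Theorem 6 of the paper). With `c = 2/3`, `k = M/3` and `δ ∈ [0, 1/6]`,
`u_F` is maximized at `m = 0` with value `(1/2+δ)·(2M/3)`, `u_G` is maximized
at `m = M` with value `M/3`, and for every `m ∈ {0,…,M}` the summed
suboptimality `(u_F(0) − u_F(m)) + (u_G(M) − u_G(m))` is at least
`(2/3)·M·δ`. -/
theorem stmt_13
    (M : ℕ) (hM : 3 ≤ M) (hdvd : 3 ∣ M)
    (δ : ℝ) (hδ : δ ∈ Set.Icc (0:ℝ) (1/6))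
    (uF uG : ℕ → ℝ)
    (huF : ∀ m : ℕ, uF m =
      (1/2 + δ) * ((1 - 2/3) * m + max 0 ((M : ℝ) - (M : ℝ)/3 - m))
        + (1/2 - δ) * ((1 - 2/3) * m))
    (huG : ∀ m : ℕ, uG m =
      (1/2 - δ) * ((1 - 2/3) * m + max 0 ((M : ℝ) - (M : ℝ)/3 - m))
        + (1/2 + δ) * ((1 - 2/3) * m)) :
    ((∀ m' ≤ M, uF m' ≤ uF 0) ∧ uF 0 = (1/2 + δ) * (2 * (M : ℝ) / 3)) ∧
    ((∀ m' ≤ M, uG m' ≤ uG M) ∧ uG M = (M : ℝ) / 3) ∧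
    (∀ m ≤ M, (uF 0 - uF m) + (uG M - uG m) ≥ (2/3) * M * δ) := by
  obtain ⟨h0, h1⟩ := hδ
  have hMr : (0:ℝ) ≤ M := Nat.cast_nonneg M
  have eF0 : uF 0 = (1/2 + δ) * (2 * (M : ℝ) / 3) := by
    rw [huF, Nat.cast_zero, max_eq_right (by linarith)]; ring
  have eGM : uG M = (M : ℝ) / 3 := by
    rw [huG, max_eq_left (by linarith)]; ring
  have hMd : 0 ≤ (M : ℝ) * δ := mul_nonneg hMr h0
  refine ⟨⟨fun m hm => ?_, eF0⟩, ⟨fun m hm => ?_, eGM⟩, fun m hm => ?_⟩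
  all_goals
    have hm1 : (m : ℝ) ≤ M := by exact_mod_cast hm
    have hm0 : (0 : ℝ) ≤ m := Nat.cast_nonneg m
    have hmd : 0 ≤ (m : ℝ) * δ := mul_nonneg hm0 h0
    have hmd2 : 0 ≤ ((M : ℝ) - m) * δ := mul_nonneg (by linarith) h0
    simp only [eF0, eGM, huF m, huG m]
    rcases le_total ((M : ℝ) - (M : ℝ)/3 - m) 0 with h | h
    · rw [max_eq_left h]; nlinarith
    · rw [max_eq_right h]; nlinarith [mul_nonneg h h0]
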